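/- Let σ > 0, 0 < p < 1, and 0 < d2max ≤ d1max. Then the function f(d2) = 1 − Q(d2/(2σ)) − p·Q((d1max − d2)/(2σ)) is concave on the interval [0, d2max]. -/

import Mathlib

/-- The Gaussian tail function `Q(x) = ∫_x^∞ (1/√(2π)) e^{−t²/2} dt`. -/
noncomputable def gaussQ (x : ℝ) : ℝ :=
  ∫ t in Set.Ioi x, (1 / Real.sqrt (2 * Real.pi)) * Real.exp (-t ^ 2 / 2)

lemma gaussQ_integrable :
    MeasureTheory.Integrable
      (fun t : ℝ => (1 / Real.sqrt (2 * Real.pi)) * Real.exp (-t ^ 2 / 2)) := by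
  have h := (integrable_exp_neg_mul_sq (b := 1 / 2) (by norm_num)).const_mul
    (1 / Real.sqrt (2 * Real.pi))
  refine h.congr (Filter.Eventually.of_forall fun t => ?_)
  simp only
  congr 2
  ring

lemma gaussQ_hasDerivAt (x : ℝ) :
    HasDerivAt gaussQ (-((1 / Real.sqrt (2 * Real.pi)) * Real.exp (-x ^ 2 / 2))) x := by
  have hc : Continuous
      (fun t : ℝ => (1 / Real.sqrt (2 * Real.pi)) * Real.exp (-t ^ 2 / 2)) := by fun_prop
  have he : gaussQ = fun y => gaussQ 0 -
      ∫ t in (0 : ℝ)..y, (1 / Real.sqrt (2 * Real.pi)) * Real.exp (-t ^ 2 / 2) := by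
    funext y
    have := intervalIntegral.integral_interval_add_Ioi (a := 0) (b := y)
      gaussQ_integrable.integrableOn gaussQ_integrable.integrableOn
    unfold gaussQ
    linarith
  rw [he]
  exact (hc.integral_hasStrictDerivAt 0 x).hasDerivAt.const_sub _

lemma gaussQ_convexOn : ConvexOn ℝ (Set.Ici 0) gaussQ := by
  refine MonotoneOn.convexOn_of_deriv (convex_Ici 0)
    (fun x _ => (gaussQ_hasDerivAt x).continuousAt.continuousWithinAt)
    (fun x _ => (gaussQ_hasDerivAt x).differentiableAt.differentiableWithinAt) ?_
  intro x hx y hy hxy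
  rw [interior_Ici, Set.mem_Ioi] at hx hy
  rw [(gaussQ_hasDerivAt x).deriv, (gaussQ_hasDerivAt y).deriv]
  apply neg_le_neg
  apply mul_le_mul_of_nonneg_left _ (by positivity)
  apply Real.exp_le_exp.mpr
  nlinarith

/-- With sender 1's separation fixed at `d1max`, the Case I correct-decoding probability
`f(d2) = 1 − Q(d2/(2σ)) − p·Q((d1max − d2)/(2σ))` is concave on `[0, d2max]`
when `d2max ≤ d1max`. -/
theorem stmt_12 (σ p d1max d2max : ℝ) (hσ : 0 < σ) (hp : 0 < p) (hp1 : p < 1)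
    (h2 : 0 < d2max) (h12 : d2max ≤ d1max) :
    ConcaveOn ℝ (Set.Icc 0 d2max)
      (fun d2 : ℝ =>
        1 - gaussQ (d2 / (2 * σ)) - p * gaussQ ((d1max - d2) / (2 * σ))) := by
  refine ⟨convex_Icc 0 d2max, ?_⟩
  intro x hx y hy a b ha hb hab
  have hs : 0 < 2 * σ := by linarith
  have h1 := gaussQ_convexOn.2 (x := x / (2 * σ)) (y := y / (2 * σ))
    (div_nonneg hx.1 hs.le) (div_nonneg hy.1 hs.le) ha hb hab
  have h3 := gaussQ_convexOn.2 (x := (d1max - x) / (2 * σ)) (y := (d1max - y) / (2 * σ))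
    (div_nonneg (by linarith [hx.2]) hs.le) (div_nonneg (by linarith [hy.2]) hs.le) ha hb hab
  simp only [smul_eq_mul] at h1 h3 ⊢
  have e1 : a * (x / (2 * σ)) + b * (y / (2 * σ)) = (a * x + b * y) / (2 * σ) := by ring
  have e2 : a * ((d1max - x) / (2 * σ)) + b * ((d1max - y) / (2 * σ))
      = (d1max - (a * x + b * y)) / (2 * σ) := by
    have : b = 1 - a := by linarith
    subst this
    ring
  rw [e1] at h1
  rw [e2] at h3
  have h4 := mul_le_mul_of_nonneg_left h3 hp.le
  linear_combination h1 + h4 + hab
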